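/- If R(e^{iω}) ≥ 0 for all ω ∈ ℝ, where R(z) = Σ_{k=−n}^n r_k z^{−k} is a trigonometric polynomial with real values on the unit circle (r_{−k} = conj(r_k)), then there exists a positive semidefinite Hermitian matrix G ∈ ℂ^{(n+1)×(n+1)} with tr(Θ_k G) = r_k for all k ∈ {0,...,n}. -/

import Mathlib

/-!
The proof first establishes the Fejér–Riesz theorem for the algebraic polynomial `Q(z) = z^n R(z)`
of degree at most `2n`, by induction on `n` (`fejerRiesz_polynomial`). Since `z^{-n} Q(z)` is real
on the circle, `Q` equals its own conjugate reversal `z^{2n} conj (Q(1 / conj z))`, so a root `a`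
of `Q` yields a second factor `1 - conj a z`: `Q = (1 - conj a z) S`. The cofactor `S` still
vanishes at `a`: if `|a| ≠ 1` because the first factor does not, and if `|a| = 1` because a
nonnegative function has derivative zero where it vanishes. Hence
`Q = (z - a) (1 - conj a z) Q₂`, where `(z - a) (1 - conj a z) = z |z - a|²` on the circle, and
`Q₂` satisfies the induction hypothesis for `n - 1`.

If `R = |P|²` on the circle, then `Q = P · P*` as polynomials, with `P*` the conjugate reversal of
`P`, and comparing coefficients shows that `G = p pᴴ` has the prescribed diagonal sums.
-/

open Complex Matrix Finset ComplexConjugate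
open scoped ComplexOrder

/-- Elementary Toeplitz matrix: ones on the `k`-th lower diagonal. -/
noncomputable def theta (n : ℕ) (k : Fin n) : Matrix (Fin n) (Fin n) ℂ :=
  Matrix.of fun i j => if (i : ℤ) - (j : ℤ) = (k : ℤ) then 1 else 0

/-! ### Conjugate reversal of polynomials -/

/-- The conjugate reversal `z^N conj (P (1 / conj z))` of a polynomial `P` of degree at most `N`. -/
noncomputable def conjReverse (N : ℕ) (P : Polynomial ℂ) : Polynomial ℂ :=
  Polynomial.reflect N (P.map (starRingEnd ℂ))

lemma mul_conj_of_norm_one {z : ℂ} (hz : ‖z‖ = 1) : z * conj z = 1 := by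
  simp [Complex.mul_conj', hz]

lemma conjReverse_eval {N : ℕ} {P : Polynomial ℂ} (hP : P.natDegree ≤ N) {z : ℂ}
    (hz : ‖z‖ = 1) : (conjReverse N P).eval z = z ^ N * conj (P.eval z) := by
  have h1 := mul_conj_of_norm_one hz
  let _ : Invertible (conj z) := ⟨z, h1, by rw [mul_comm]; exact h1⟩
  have h := Polynomial.eval₂_reflect_mul_pow (RingHom.id ℂ) (conj z) N
    (P.map (starRingEnd ℂ)) (Polynomial.natDegree_map_le.trans hP)
  have h2 : (P.map (starRingEnd ℂ)).eval (conj z) = conj (P.eval z) := by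
    rw [Polynomial.eval_map, Polynomial.eval₂_hom]
  change (conjReverse N P).eval z * conj z ^ N = (P.map (starRingEnd ℂ)).eval (conj z) at h
  rw [← h2, ← h, mul_left_comm, ← mul_pow, h1, one_pow, mul_one]

lemma conjReverse_coeff {N : ℕ} (P : Polynomial ℂ) {i : ℕ} (hi : i ≤ N) :
    (conjReverse N P).coeff i = conj (P.coeff (N - i)) := by
  rw [conjReverse, Polynomial.coeff_reflect, Polynomial.revAt_le hi, Polynomial.coeff_map]

lemma conjReverse_natDegree_le {N : ℕ} {P : Polynomial ℂ} (hP : P.natDegree ≤ N) :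
    (conjReverse N P).natDegree ≤ N :=
  Polynomial.natDegree_reflect_le.trans (max_le le_rfl (Polynomial.natDegree_map_le.trans hP))

lemma eq_of_eval_eq_on_circle {P Q : Polynomial ℂ}
    (h : ∀ z : ℂ, ‖z‖ = 1 → P.eval z = Q.eval z) : P = Q := by
  apply Polynomial.eq_of_infinite_eval_eq
  have hs : (Metric.sphere (0 : ℂ) 1).Infinite := by
    apply (isPreconnected_sphere (by simp) (0 : ℂ) 1).infinite_of_nontrivial
    refine ⟨1, by simp, -1, by simp, ?_⟩
    norm_num
  exact hs.mono fun z hz => h z (by simpa using hz)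

/-! ### Nonnegativity along the circle -/

/-- A function of a real variable with values in `[0, ∞) ⊆ ℂ` has derivative zero wherever it
vanishes. -/
lemma deriv_eq_zero_of_nonneg {f : ℝ → ℂ} {f' : ℂ} {x : ℝ} (hf : ∀ t, 0 ≤ f t)
    (hx : f x = 0) (hd : HasDerivAt f f' x) : f' = 0 := by
  have hre : HasDerivAt (fun t => (f t).re) f'.re x :=
    Complex.reCLM.hasFDerivAt.comp_hasDerivAt x hd
  have him : HasDerivAt (fun t => (f t).im) f'.im x :=
    Complex.imCLM.hasFDerivAt.comp_hasDerivAt x hd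
  apply Complex.ext
  · refine IsLocalMin.hasDerivAt_eq_zero (Filter.Eventually.of_forall fun t => ?_) hre
    simpa [hx] using (Complex.nonneg_iff.1 (hf t)).1
  · have h0 : (fun t => (f t).im) = fun _ => (0 : ℝ) :=
      funext fun t => (Complex.nonneg_iff.1 (hf t)).2.symm
    rw [h0] at him
    exact him.unique (hasDerivAt_const x 0)

lemma hasDerivAt_exp_mul_I (t : ℝ) :
    HasDerivAt (fun s : ℝ => Complex.exp (s * I)) (Complex.exp (t * I) * I) t := by
  have h : HasDerivAt (fun s : ℝ => (s : ℂ) * I) (1 * I) t :=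
    (Complex.ofRealCLM.hasDerivAt (x := t)).mul_const I
  simpa using h.cexp

/-- If `(1 - conj a z) S(z) z^{-n}` is nonnegative on the circle and `a` lies on the circle, then
the cofactor `S` vanishes at `a` as well. -/
lemma eval_eq_zero_of_circle_root {n : ℕ} {S : Polynomial ℂ} {a : ℂ} (ha : ‖a‖ = 1)
    (h : ∀ z : ℂ, ‖z‖ = 1 → 0 ≤ (1 - conj a * z) * S.eval z * conj z ^ n) : S.eval a = 0 := by
  obtain ⟨θ, rfl⟩ := (Complex.norm_eq_one_iff a).1 ha
  have hd := hasDerivAt_exp_mul_I θ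
  have hS : DifferentiableAt ℝ
      (fun s : ℝ => S.eval (Complex.exp (s * I)) * conj (Complex.exp (s * I)) ^ n) θ := by
    refine DifferentiableAt.mul ?_ (DifferentiableAt.pow ?_ n)
    · exact ((S.hasDerivAt _).comp_of_eq θ hd rfl).differentiableAt
    · exact (Complex.conjCLE.toContinuousLinearMap.hasFDerivAt.comp_hasDerivAt θ
        hd).differentiableAt
  have h1 := mul_conj_of_norm_one ha
  have hprod := ((hd.const_mul (conj (Complex.exp (θ * I)))).const_sub 1).mul hS.hasDerivAt
  have h0 := deriv_eq_zero_of_nonneg (fun t => ?_) ?_ hprod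
  · rw [mul_comm] at h1
    have hc : conj (Complex.exp (θ * I)) ≠ 0 := fun hc => by simp [hc] at h1
    rw [h1, sub_self, zero_mul, add_zero, ← mul_assoc (conj (Complex.exp (θ * I))), h1, one_mul] at h0
    simpa [hc] using h0
  · have := h (Complex.exp (t * I)) (Complex.norm_exp_ofReal_mul_I t)
    simpa [mul_assoc] using this
  · rw [mul_comm] at h1
    simp only [Pi.mul_apply, h1, sub_self, zero_mul]

/-- By continuity, nonnegativity on the circle away from a single point extends to that point. -/
lemma nonneg_on_circle_of_ne {n : ℕ} {Q : Polynomial ℂ} {a : ℂ}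
    (h : ∀ z : ℂ, ‖z‖ = 1 → z ≠ a → 0 ≤ Q.eval z * conj z ^ n) (z : ℂ) (hz : ‖z‖ = 1) :
    0 ≤ Q.eval z * conj z ^ n := by
  obtain ⟨θ, rfl⟩ := (Complex.norm_eq_one_iff z).1 hz
  have hev := (hasDerivAt_exp_mul_I θ).eventually_ne (c := a) (by simp)
  have hcont : Continuous
      (fun s : ℝ => Q.eval (Complex.exp (s * I)) * conj (Complex.exp (s * I)) ^ n) := by
    refine Continuous.mul (Q.continuous.comp (by fun_prop)) (Continuous.pow ?_ n)
    exact Complex.continuous_conj.comp (by fun_prop)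
  refine ge_of_tendsto (x := nhdsWithin θ {θ}ᶜ) ((hcont.tendsto θ).mono_left nhdsWithin_le_nhds) ?_
  filter_upwards [hev] with t ht
  exact h _ (Complex.norm_exp_ofReal_mul_I t) ht

/-! ### The Fejér–Riesz factorization -/

/-- A polynomial `Q` for which `z^{-n} Q(z)` is nonnegative, in particular real, on the circle
is its own conjugate reversal. -/
lemma conjReverse_eq_self {n : ℕ} {Q : Polynomial ℂ} (hQ : Q.natDegree ≤ 2 * n)
    (h : ∀ z : ℂ, ‖z‖ = 1 → 0 ≤ Q.eval z * conj z ^ n) : conjReverse (2 * n) Q = Q := by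
  refine eq_of_eval_eq_on_circle fun z hz => ?_
  have h1 := mul_conj_of_norm_one hz
  have h2 : conj (Q.eval z * conj z ^ n) = Q.eval z * conj z ^ n :=
    Complex.conj_eq_iff_im.2 (Complex.nonneg_iff.1 (h z hz)).2.symm
  rw [map_mul, map_pow, Complex.conj_conj] at h2
  have hp : z ^ n * conj z ^ n = 1 := by rw [← mul_pow, h1, one_pow]
  rw [conjReverse_eval hQ hz]
  linear_combination z ^ n * h2 + Q.eval z * hp

lemma conjReverse_X_sub_C_mul (N : ℕ) (a : ℂ) {Q : Polynomial ℂ} (hQ : Q.natDegree ≤ N) :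
    conjReverse (1 + N) ((Polynomial.X - Polynomial.C a) * Q) =
      (1 - Polynomial.C (conj a) * Polynomial.X) * conjReverse N Q := by
  unfold conjReverse
  rw [Polynomial.map_mul, Polynomial.reflect_mul _ _
    (Polynomial.natDegree_map_le.trans (Polynomial.natDegree_X_sub_C_le a))
    (Polynomial.natDegree_map_le.trans hQ)]
  congr 1
  simp [Polynomial.reflect_sub]

/-- The Fejér–Riesz theorem for the polynomial `Q(z) = z^n R(z)`; on the circle `conj z` stands
for `z⁻¹`. -/
theorem fejerRiesz_polynomial (n : ℕ) : ∀ Q : Polynomial ℂ, Q.natDegree ≤ 2 * n →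
    (∀ z : ℂ, ‖z‖ = 1 → 0 ≤ Q.eval z * conj z ^ n) →
    ∃ P : Polynomial ℂ, P.natDegree ≤ n ∧
      ∀ z : ℂ, ‖z‖ = 1 → Q.eval z * conj z ^ n = P.eval z * conj (P.eval z) := by
  induction n with
  | zero =>
    intro Q hQ h
    obtain ⟨c, rfl⟩ : ∃ c, Q = Polynomial.C c :=
      ⟨_, Polynomial.eq_C_of_natDegree_le_zero (by simpa using hQ)⟩
    have hc : 0 ≤ c := by simpa using h 1 (by simp)
    obtain ⟨hre, him⟩ := Complex.nonneg_iff.1 hc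
    refine ⟨Polynomial.C (Real.sqrt c.re : ℂ), by simp, fun z _ => ?_⟩
    simp only [Polynomial.eval_C, pow_zero, mul_one, Complex.conj_ofReal]
    rw [← Complex.ofReal_mul, Real.mul_self_sqrt hre]
    exact Complex.ext rfl him.symm
  | succ n ih =>
    intro Q hQ h
    have hself := conjReverse_eq_self hQ h
    -- A constant `Q` is its own reversal of order `2(n + 1) > 0` only if it is zero.
    obtain ⟨a, ha⟩ : ∃ a, Q.IsRoot a := by
      by_cases hd : Q.degree = 0
      · refine ⟨0, ?_⟩
        have hc := conjReverse_coeff Q (Nat.zero_le (2 * (n + 1)))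
        rw [hself, Polynomial.coeff_eq_zero_of_natDegree_lt (n := 2 * (n + 1) - 0)
          (by rw [show Q.natDegree = 0 from Polynomial.natDegree_eq_of_degree_eq_some hd]; omega), map_zero] at hc
        rwa [Polynomial.IsRoot, ← Polynomial.coeff_zero_eq_eval_zero]
      · exact IsAlgClosed.exists_root Q hd
    obtain ⟨Q₁, hQ₁⟩ := Polynomial.dvd_iff_isRoot.2 ha
    have hd₁ : Q₁.natDegree ≤ 2 * n + 1 := by
      have := Polynomial.natDegree_divByMonic Q (Polynomial.monic_X_sub_C a)
      rw [hQ₁, Polynomial.mul_divByMonic_cancel_left _ (Polynomial.monic_X_sub_C a), ← hQ₁,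
        Polynomial.natDegree_X_sub_C] at this
      omega
    -- Reversing `Q = (X - a) Q₁` turns the factor `X - a` into `1 - conj a X`.
    obtain ⟨S, hS, hdS⟩ : ∃ S : Polynomial ℂ,
        Q = (1 - Polynomial.C (conj a) * Polynomial.X) * S ∧ S.natDegree ≤ 2 * n + 1 := by
      refine ⟨_, ?_, conjReverse_natDegree_le hd₁⟩
      rw [← conjReverse_X_sub_C_mul _ _ hd₁, ← hQ₁, ← hself]
      congr 1
      · omega
      · exact hself.symm
    have hSa : S.eval a = 0 := by
      by_cases h1 : ‖a‖ = 1
      · refine eval_eq_zero_of_circle_root (n := n + 1) h1 fun z hz => ?_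
        have := h z hz
        rw [hS] at this
        simpa using this
      · have h0 : Q.eval a = 0 := ha
        rw [hS] at h0
        simp only [Polynomial.eval_mul, Polynomial.eval_sub, Polynomial.eval_one,
          Polynomial.eval_C, Polynomial.eval_X, mul_eq_zero] at h0
        refine h0.resolve_left fun h2 => h1 ?_
        rw [mul_comm, Complex.mul_conj'] at h2
        have h3 : ‖a‖ ^ 2 = 1 := by exact_mod_cast (sub_eq_zero.1 h2).symm
        exact (pow_eq_one_iff_of_nonneg (norm_nonneg a) two_ne_zero).1 h3
    obtain ⟨Q₂, hQ₂⟩ := Polynomial.dvd_iff_isRoot.2 (show S.IsRoot a from hSa)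
    have hd₂ : Q₂.natDegree ≤ 2 * n := by
      have := Polynomial.natDegree_divByMonic S (Polynomial.monic_X_sub_C a)
      rw [hQ₂, Polynomial.mul_divByMonic_cancel_left _ (Polynomial.monic_X_sub_C a), ← hQ₂,
        Polynomial.natDegree_X_sub_C] at this
      omega
    have hfac : ∀ z : ℂ, ‖z‖ = 1 → Q.eval z * conj z ^ (n + 1) =
        ((z - a) * conj (z - a)) * (Q₂.eval z * conj z ^ n) := by
      intro z hz
      rw [hS, hQ₂]
      simp only [Polynomial.eval_mul, Polynomial.eval_sub, Polynomial.eval_one,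
        Polynomial.eval_C, Polynomial.eval_X, map_sub]
      linear_combination (-conj a * (z - a) * Q₂.eval z * conj z ^ n) *
        mul_conj_of_norm_one hz
    obtain ⟨P, hP, hPe⟩ := ih Q₂ hd₂ (nonneg_on_circle_of_ne (a := a) fun z hz hza => by
      have h1 := h z hz
      have h2 : 0 < ‖z - a‖ ^ 2 := pow_pos (norm_pos_iff.2 (sub_ne_zero.2 hza)) 2
      rw [hfac z hz, Complex.mul_conj'] at h1
      have h3 : (0 : ℂ) < (‖z - a‖ : ℂ) ^ 2 := by exact_mod_cast h2
      exact le_of_mul_le_mul_left (by rwa [mul_zero]) h3)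
    refine ⟨(Polynomial.X - Polynomial.C a) * P, ?_, fun z hz => ?_⟩
    · have := Polynomial.natDegree_mul_le (p := Polynomial.X - Polynomial.C a) (q := P)
      rw [Polynomial.natDegree_X_sub_C] at this
      omega
    · rw [hfac z hz, hPe z hz]
      simp only [Polynomial.eval_mul, Polynomial.eval_sub, Polynomial.eval_C, Polynomial.eval_X,
        map_mul]
      ring

/-! ### Gram matrices and coefficients -/

/-- The `k`-th diagonal sum of `G = p pᴴ` is a correlation of the vector `p`. -/
lemma trace_theta_mul_vecMulVec (n : ℕ) (p : ℕ → ℂ) (k : Fin (n + 1)) :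
    (theta (n + 1) k * vecMulVec (fun i : Fin (n + 1) => p i) (star fun i : Fin (n + 1) => p i)).trace =
      ∑ j ∈ Finset.range (n - k + 1), p j * conj (p (j + k)) := by
  have hk : (k : ℕ) ≤ n := Nat.lt_succ_iff.1 k.2
  simp only [Matrix.trace, Matrix.diag, Matrix.mul_apply, theta, Matrix.of_apply,
    vecMulVec_apply, Pi.star_apply, ite_mul, one_mul, zero_mul]
  rw [Finset.sum_comm]
  rw [Fin.sum_univ_eq_sum_range (fun j : ℕ => ∑ i : Fin (n + 1),
    if ((i : ℕ) : ℤ) - (j : ℤ) = ((k : ℕ) : ℤ) then p j * star (p i) else 0)]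
  have hsub : Finset.range (n - k + 1) ⊆ Finset.range (n + 1) :=
    Finset.range_subset_range.2 (by omega)
  rw [← Finset.sum_subset hsub]
  · refine Finset.sum_congr rfl fun j hj => ?_
    have hj' := Finset.mem_range.1 hj
    rw [Finset.sum_eq_single (⟨j + k, by omega⟩ : Fin (n + 1))]
    · simp
    · intro i _ hi
      refine if_neg fun h => hi (Fin.ext ?_)
      change (i : ℕ) = j + k
      omega
    · simp
  · intro j _ hj
    have hj' : ¬ j < n - k + 1 := fun h => hj (Finset.mem_range.2 h)
    refine Finset.sum_eq_zero fun i _ => if_neg fun h => ?_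
    have := i.2
    omega

/-- The polynomial `z^n R(z)`, where `R(z) = r_0 + Σ_{k=1}^n (r_k z^{-k} + conj(r_k) z^k)`. -/
noncomputable def shiftedPoly (n : ℕ) (r : ℕ → ℂ) : Polynomial ℂ :=
  Polynomial.C (r 0) * Polynomial.X ^ n + ∑ k ∈ Finset.Icc 1 n,
    (Polynomial.C (r k) * Polynomial.X ^ (n - k) + Polynomial.C (conj (r k)) *
      Polynomial.X ^ (n + k))

lemma shiftedPoly_natDegree_le (n : ℕ) (r : ℕ → ℂ) : (shiftedPoly n r).natDegree ≤ 2 * n := by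
  refine Polynomial.natDegree_add_le_of_degree_le
    ((Polynomial.natDegree_C_mul_X_pow_le _ _).trans (by omega))
    (Polynomial.natDegree_sum_le_of_forall_le _ _ fun k hk => ?_)
  have := Finset.mem_Icc.1 hk
  exact Polynomial.natDegree_add_le_of_degree_le
    ((Polynomial.natDegree_C_mul_X_pow_le _ _).trans (by omega))
    ((Polynomial.natDegree_C_mul_X_pow_le _ _).trans (by omega))

lemma shiftedPoly_coeff (n : ℕ) (r : ℕ → ℂ) {k : ℕ} (hk : k ≤ n) :
    (shiftedPoly n r).coeff (n - k) = r k := by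
  simp only [shiftedPoly, Polynomial.coeff_add, Polynomial.finsetSum_coeff,
    Polynomial.coeff_C_mul_X_pow]
  rcases Nat.eq_zero_or_pos k with rfl | hk0
  · rw [Finset.sum_eq_zero]
    · simp
    · intro j hj
      have := Finset.mem_Icc.1 hj
      rw [if_neg (by omega), if_neg (by omega), add_zero]
  · rw [if_neg (by omega), Finset.sum_eq_single k]
    · rw [if_pos rfl, if_neg (by omega), add_zero, zero_add]
    · intro j hj hjk
      have := Finset.mem_Icc.1 hj
      rw [if_neg (by omega), if_neg (by omega), add_zero]
    · intro h
      exact absurd (Finset.mem_Icc.2 ⟨hk0, hk⟩) h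

lemma shiftedPoly_eval (n : ℕ) (r : ℕ → ℂ) {z : ℂ} (hz : ‖z‖ = 1) :
    (shiftedPoly n r).eval z * conj z ^ n =
      r 0 + ∑ k ∈ Finset.Icc 1 n, (r k * conj z ^ k + conj (r k) * z ^ k) := by
  have h1 := mul_conj_of_norm_one hz
  have hp : ∀ m : ℕ, z ^ m * conj z ^ m = 1 := fun m => by rw [← mul_pow, h1, one_pow]
  simp only [shiftedPoly, Polynomial.eval_add, Polynomial.eval_finsetSum, Polynomial.eval_mul,
    Polynomial.eval_C, Polynomial.eval_pow, Polynomial.eval_X]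
  rw [add_mul, mul_assoc, hp, mul_one, Finset.sum_mul]
  congr 1
  refine Finset.sum_congr rfl fun k hk => ?_
  obtain ⟨m, rfl⟩ := Nat.exists_eq_add_of_le (Finset.mem_Icc.1 hk).2
  rw [Nat.add_sub_cancel_left]
  linear_combination (r k * conj z ^ k) * hp m + (conj (r k) * z ^ k) * hp (k + m)

/-- Gram-matrix Fejér–Riesz: if the trigonometric polynomial
`R(e^{iω}) = r_0 + Σ_{k=1}^n (r_k e^{-ikω} + conj(r_k) e^{ikω})` (with `r_0` real)
is nonnegative on the circle, then there exists a positive semidefinite Hermitian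
`G ∈ ℂ^{(n+1)×(n+1)}` with `tr(Θ_k G) = r_k` for all `k ∈ {0,...,n}`. -/
theorem fejer_riesz_gram
    (n : ℕ) (r : ℕ → ℂ) (hr0 : conj (r 0) = r 0)
    (hpos : ∀ ω : ℝ,
      0 ≤ (r 0 + ∑ k ∈ Finset.Icc 1 n,
            (r k * Complex.exp (-(Complex.I * (k : ℂ) * (ω : ℂ)))
              + conj (r k) * Complex.exp (Complex.I * (k : ℂ) * (ω : ℂ)))).re) :
    ∃ G : Matrix (Fin (n + 1)) (Fin (n + 1)) ℂ,
      G.PosSemidef ∧ ∀ k : Fin (n + 1), (theta (n + 1) k * G).trace = r (k : ℕ) := by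
  have hQ : ∀ z : ℂ, ‖z‖ = 1 → 0 ≤ (shiftedPoly n r).eval z * conj z ^ n := by
    intro z hz
    rw [shiftedPoly_eval n r hz, Complex.nonneg_iff]
    constructor
    · obtain ⟨ω, rfl⟩ := (Complex.norm_eq_one_iff z).1 hz
      convert hpos ω using 6 with k hk
      · rw [← Complex.exp_conj, ← Complex.exp_nat_mul]
        congr 1
        simp only [map_mul, Complex.conj_ofReal, Complex.conj_I]
        ring
      · rw [← Complex.exp_nat_mul]
        congr 1
        ring
    · refine (Complex.conj_eq_iff_im.1 ?_).symm
      simp only [map_add, map_sum, map_mul, map_pow, Complex.conj_conj, hr0]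
      congr 1
      exact Finset.sum_congr rfl fun k _ => add_comm _ _
  obtain ⟨P, hP, hPe⟩ := fejerRiesz_polynomial n _ (shiftedPoly_natDegree_le n r) hQ
  have hprod : shiftedPoly n r = P * conjReverse n P := by
    refine eq_of_eval_eq_on_circle fun z hz => ?_
    have hp : z ^ n * conj z ^ n = 1 := by
      rw [← mul_pow, mul_conj_of_norm_one hz, one_pow]
    rw [Polynomial.eval_mul, conjReverse_eval hP hz]
    linear_combination z ^ n * hPe z hz - (shiftedPoly n r).eval z * hp
  refine ⟨vecMulVec (fun i : Fin (n + 1) => P.coeff i) (star fun i : Fin (n + 1) => P.coeff i),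
    Matrix.posSemidef_vecMulVec_self_star _, fun k => ?_⟩
  have hk : (k : ℕ) ≤ n := Nat.lt_succ_iff.1 k.2
  rw [trace_theta_mul_vecMulVec n P.coeff k, ← shiftedPoly_coeff n r hk, hprod,
    Polynomial.coeff_mul, Finset.Nat.sum_antidiagonal_eq_sum_range_succ_mk]
  refine Finset.sum_congr rfl fun j hj => ?_
  have hj' := Finset.mem_range.1 hj
  rw [conjReverse_coeff P (by omega), show n - (n - (k : ℕ) - j) = j + k by omega]
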